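/- arXiv:2508.14813 — 8 statements merged into one kernel-verified Lean document; each statement's English description precedes it below -/
import Mathlib

section
/- Continuity of point evaluations on the Filipović space: for every w-pair (f, g) and every x ≥ 0 one has f(x)² ≤ (1 + ∫₀ˣ w(s)⁻¹ ds) · (f(0)² + ∫₀^∞ w(s) g(s)² ds). In particular, the point evaluation f ↦ f(x) is a continuous linear functional on H_w with norm at most (1 + ∫₀ˣ w(s)⁻¹ ds)^{1/2}. -/
open MeasureTheory Set

/-- `(f, g)` is a `w`-pair: `g` is measurable with `∫₀^∞ w g² < ∞`, and
`f x = f 0 + ∫₀ˣ g` for all `x ≥ 0`. -/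
def IsWPair (w f g : ℝ → ℝ) : Prop :=
  Measurable g ∧ IntegrableOn (fun s => w s * g s ^ 2) (Ioi 0) ∧
    ∀ x, 0 ≤ x → f x = f 0 + ∫ s in (0:ℝ)..x, g s

/-- Continuity of point evaluations on the Filipović space:
`f(x)² ≤ (1 + ∫₀ˣ w⁻¹) · (f(0)² + ∫₀^∞ w g²)` for every `w`-pair `(f, g)` and `x ≥ 0`. -/
theorem pointEvaluation_bound
    (w : ℝ → ℝ) (hw_meas : Measurable w) (hw_mono : MonotoneOn w (Ici 0))
    (hw_ge : ∀ s, 0 ≤ s → 1 ≤ w s) (hw0 : w 0 = 1)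
    (hw_int : IntegrableOn (fun s => (w s)⁻¹) (Ioi 0))
    (f g : ℝ → ℝ) (hfg : IsWPair w f g)
    (x : ℝ) (hx : 0 ≤ x) :
    (f x) ^ 2 ≤ (1 + ∫ s in (0:ℝ)..x, (w s)⁻¹) *
      ((f 0) ^ 2 + ∫ s in Ioi (0:ℝ), w s * g s ^ 2) := by
  obtain ⟨hg, hint, hf⟩ := hfg
  have hsub : Ioc (0:ℝ) x ⊆ Ioi 0 := fun s hs => hs.1
  have h1 : IntegrableOn (fun s => w s * g s ^ 2) (Ioc 0 x) := hint.mono_set hsub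
  have h2 : IntegrableOn (fun s => (w s)⁻¹) (Ioc 0 x) := hw_int.mono_set hsub
  have key : ∀ t : ℝ, ∀ s, 0 < s → 2 * t * g s ≤ w s * g s ^ 2 + t ^ 2 * (w s)⁻¹ := by
    intro t s hs
    have hw : 0 < w s := by linarith [hw_ge s hs.le]
    have e : w s * g s ^ 2 + t ^ 2 * (w s)⁻¹ - 2 * t * g s = (w s * g s - t) ^ 2 * (w s)⁻¹ := by
      field_simp
      ring
    have : 0 ≤ (w s * g s - t) ^ 2 * (w s)⁻¹ := by positivity
    linarith
  have h3 : IntegrableOn g (Ioc 0 x) := by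
    refine Integrable.mono' (h1.add h2) hg.aestronglyMeasurable ?_
    refine (ae_restrict_iff' measurableSet_Ioc).2 (Filter.Eventually.of_forall fun s hs => ?_)
    have k1 := key 1 s hs.1
    have k2 := key (-1) s hs.1
    have hw : 0 < w s := by linarith [hw_ge s hs.1.le]
    have p1 : 0 ≤ w s * g s ^ 2 := by positivity
    have p2 : 0 ≤ (w s)⁻¹ := by positivity
    simp only [Pi.add_apply, Real.norm_eq_abs]
    rw [abs_le]
    constructor <;> linarith
  have hB : ∫ s in Ioc (0:ℝ) x, w s * g s ^ 2 ≤ ∫ s in Ioi (0:ℝ), w s * g s ^ 2 := by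
    refine setIntegral_mono_set hint ?_ hsub.eventuallyLE
    refine (ae_restrict_iff' measurableSet_Ioi).2 (Filter.Eventually.of_forall fun s hs => ?_)
    have hw : 0 < w s := by linarith [hw_ge s (le_of_lt hs)]
    simp only [Pi.zero_apply]
    positivity
  have hA : 0 ≤ ∫ s in Ioc (0:ℝ) x, (w s)⁻¹ := by
    refine setIntegral_nonneg measurableSet_Ioc fun s hs => ?_
    have hw : 0 < w s := by linarith [hw_ge s hs.1.le]
    positivity
  have hI : ∀ t : ℝ, 2 * t * ∫ s in Ioc (0:ℝ) x, g s ≤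
      (∫ s in Ioc (0:ℝ) x, w s * g s ^ 2) + t ^ 2 * ∫ s in Ioc (0:ℝ) x, (w s)⁻¹ := by
    intro t
    rw [← integral_const_mul, ← integral_const_mul, ← integral_add h1 (h2.const_mul _)]
    exact setIntegral_mono_on (h3.const_mul _) (h1.add (h2.const_mul _)) measurableSet_Ioc
      fun s hs => key t s hs.1
  rw [hf x hx, intervalIntegral.integral_of_le hx, intervalIntegral.integral_of_le hx]
  generalize (∫ s in Ioc (0:ℝ) x, g s) = G at *
  generalize (∫ s in Ioc (0:ℝ) x, (w s)⁻¹) = A at *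
  generalize (∫ s in Ioc (0:ℝ) x, w s * g s ^ 2) = B' at *
  generalize (∫ s in Ioi (0:ℝ), w s * g s ^ 2) = B at *
  have hc : 0 < 1 + A := by linarith
  have k := hI ((f 0 + G) / (1 + A))
  set t := (f 0 + G) / (1 + A) with ht
  have hS : f 0 + G = t * (1 + A) := by rw [ht]; field_simp
  have k2 : t ^ 2 * (1 + A) ≤ f 0 ^ 2 + B := by
    have e : t * (f 0 + G) = t ^ 2 * (1 + A) := by rw [hS]; ring
    nlinarith [sq_nonneg (t - f 0)]
  rw [hS]
  nlinarith [mul_le_mul_of_nonneg_left k2 hc.le]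
end

section
/- Reproducing kernel of the Filipović space: for x ≥ 0 define u_x(y) := 1 + ∫₀^{min(x,y)} w(s)⁻¹ ds. Then (u_x, s ↦ 1_{[0,x)}(s) w(s)⁻¹) is a w-pair; for every w-pair (f, g) one has f(0)·u_x(0) + ∫₀^∞ w(s) g(s) · 1_{[0,x)}(s) w(s)⁻¹ ds = f(x), i.e. ⟨f, u_x⟩_w = f(x); and for all x, y ≥ 0, ⟨u_x, u_y⟩_w = 1 + ∫₀^{min(x,y)} w(s)⁻¹ ds. -/
open MeasureTheory Set

lemma key_indicator (h : ℝ → ℝ) (x : ℝ) (hx : 0 ≤ x) :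
    ∫ s in Ioi (0:ℝ), (Ico (0:ℝ) x).indicator h s = ∫ s in (0:ℝ)..x, h s := by
  rw [setIntegral_indicator measurableSet_Ico, intervalIntegral.integral_of_le hx,
    integral_Ioc_eq_integral_Ioo]
  congr 2
  ext s
  simp only [mem_inter_iff, mem_Ioi, mem_Ico, mem_Ioo]
  constructor
  · rintro ⟨a, b, c⟩
    exact ⟨a, c⟩
  · rintro ⟨a, c⟩
    exact ⟨a, a.le, c⟩

/-- The reproducing kernel of the Filipović space: `u_x(y) = 1 + ∫₀^{x∧y} w⁻¹`
with density `1_{[0,x)} w⁻¹` is a `w`-pair, `⟨f, u_x⟩_w = f(x)` for every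
`w`-pair `(f, g)`, and `⟨u_x, u_y⟩_w = 1 + ∫₀^{x∧y} w⁻¹`. -/
theorem reproducing_kernel
    (w : ℝ → ℝ) (hw_meas : Measurable w) (hw_mono : MonotoneOn w (Ici 0))
    (hw_ge : ∀ s, 0 ≤ s → 1 ≤ w s) (hw0 : w 0 = 1)
    (hw_int : IntegrableOn (fun s => (w s)⁻¹) (Ioi 0))
    (u : ℝ → ℝ → ℝ) (hu : ∀ x y, u x y = 1 + ∫ s in (0:ℝ)..(min x y), (w s)⁻¹)
    (d : ℝ → ℝ → ℝ) (hd : ∀ x s, d x s = (Ico (0:ℝ) x).indicator (fun t => (w t)⁻¹) s) :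
    (∀ x, 0 ≤ x → IsWPair w (u x) (d x)) ∧
    (∀ f g : ℝ → ℝ, IsWPair w f g → ∀ x, 0 ≤ x →
      f 0 * u x 0 + ∫ s in Ioi (0:ℝ), w s * g s * d x s = f x) ∧
    (∀ x y, 0 ≤ x → 0 ≤ y →
      u x 0 * u y 0 + ∫ s in Ioi (0:ℝ), w s * d x s * d y s
        = 1 + ∫ s in (0:ℝ)..(min x y), (w s)⁻¹) := by
  have hd' : ∀ x, d x = (Ico (0:ℝ) x).indicator (fun t => (w t)⁻¹) := fun x => funext (hd x)
  have hu0 : ∀ x, 0 ≤ x → u x 0 = 1 := by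
    intro x hx
    rw [hu, min_eq_right hx]
    simp
  have hne : ∀ s, 0 ≤ s → w s ≠ 0 := fun s hs => by
    have := hw_ge s hs
    positivity
  have hmul : ∀ x (g : ℝ → ℝ), (fun s => w s * g s * d x s) = (Ico (0:ℝ) x).indicator g := by
    intro x g
    funext s
    rw [hd]
    by_cases hs : s ∈ Ico (0:ℝ) x
    · have := hne s hs.1
      rw [indicator_of_mem hs, indicator_of_mem hs]
      field_simp
    · rw [indicator_of_notMem hs, indicator_of_notMem hs, mul_zero]
  have hdd : ∀ x y, 0 ≤ x → 0 ≤ y → ∫ s in (0:ℝ)..y, d x s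
      = ∫ s in (0:ℝ)..(min x y), (w s)⁻¹ := by
    intro x y hx hy
    rw [← key_indicator _ _ hy, ← key_indicator _ _ (le_min hx hy), hd', indicator_indicator,
      Ico_inter_Ico, sup_idem, inf_comm]
  refine ⟨fun x hx => ⟨?_, ?_, ?_⟩, ?_, ?_⟩
  · rw [hd']
    exact hw_meas.inv.indicator measurableSet_Ico
  · have : (fun s => w s * d x s ^ 2) = (Ico (0:ℝ) x).indicator (fun t => (w t)⁻¹) := by
      have h1 := hmul x (d x)
      rw [hd' x, indicator_indicator, inter_self, ← hd' x] at h1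
      rw [← hd' x]
      refine Eq.trans ?_ h1
      funext s
      ring
    rw [this]
    exact hw_int.indicator measurableSet_Ico
  · intro y hy
    rw [hu0 x hx, hdd x y hx hy, hu]
  · intro f g hfg x hx
    rw [hu0 x hx, hmul, key_indicator _ _ hx, mul_one, ← hfg.2.2 x hx]
  · intro x y hx hy
    rw [hu0 x hx, hu0 y hy, hmul, key_indicator _ _ hy, hdd x y hx hy, mul_one]
end

section
/- Orthonormal basis of the Filipović space induced by an orthonormal basis of L²: let (g_n)_{n≥0} be an orthonormal basis of L²((0,∞)). Define f₁ ≡ 1 (the w-pair (1, 0)) and, for n ≥ 1, f_{n+1}(x) := ∫₀ˣ g_{n−1}(s) w(s)^{−1/2} ds, with density g_{n−1} w^{−1/2}. Then: (a) each (f_m, density) is a w-pair and ⟨f_i, f_j⟩_w = 1 if i = j and 0 otherwise; (b) the family is total: if a w-pair (f, q) satisfies ⟨f, f_m⟩_w = 0 for all m ≥ 1, then f(0) = 0 and q = 0 almost everywhere, hence f ≡ 0. -/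
open MeasureTheory Set

/-- An orthonormal basis of the Filipović space induced by an orthonormal basis
`(g_n)` of `L²((0,∞))`: `f 0 ≡ 1` with density `0`, and
`f (n+1) x = ∫₀ˣ g n · w^{-1/2}` with density `g n · w^{-1/2}`.  The family is
orthonormal and total. -/
theorem filipovic_orthonormal_basis
    (w : ℝ → ℝ) (hw_meas : Measurable w) (hw_mono : MonotoneOn w (Ici 0))
    (hw_ge : ∀ s, 0 ≤ s → 1 ≤ w s) (hw0 : w 0 = 1)
    (hw_int : IntegrableOn (fun s => (w s)⁻¹) (Ioi 0))
    -- `(g n)` is an orthonormal basis of `L²((0,∞))`: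
    (g : ℕ → ℝ → ℝ) (hg_meas : ∀ n, Measurable (g n))
    (hg_L2 : ∀ n, MemLp (g n) 2 (volume.restrict (Ioi 0)))
    (hg_on : ∀ i j, ∫ s in Ioi (0:ℝ), g i s * g j s = if i = j then 1 else 0)
    (hg_total : ∀ h : ℝ → ℝ, MemLp h 2 (volume.restrict (Ioi 0)) →
      (∀ n, ∫ s in Ioi (0:ℝ), g n s * h s = 0) →
      h =ᵐ[volume.restrict (Ioi 0)] 0)
    -- the induced family in the Filipović space and its densities:
    (F D : ℕ → ℝ → ℝ)
    (hF0 : ∀ x, F 0 x = 1) (hD0 : ∀ s, D 0 s = 0)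
    (hFs : ∀ n x, F (n + 1) x = ∫ s in (0:ℝ)..x, g n s * (w s) ^ (-(1:ℝ)/2))
    (hDs : ∀ n s, D (n + 1) s = g n s * (w s) ^ (-(1:ℝ)/2)) :
    -- (a) each `(F m, D m)` is a `w`-pair and the family is orthonormal:
    ((∀ m, IsWPair w (F m) (D m)) ∧
      (∀ i j, F i 0 * F j 0 + ∫ s in Ioi (0:ℝ), w s * D i s * D j s
        = if i = j then 1 else 0)) ∧
    -- (b) totality: a `w`-pair orthogonal to every `F m` vanishes:
    (∀ f q : ℝ → ℝ, IsWPair w f q →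
      (∀ m, f 0 * F m 0 + ∫ s in Ioi (0:ℝ), w s * q s * D m s = 0) →
      f 0 = 0 ∧ q =ᵐ[volume.restrict (Ioi 0)] 0 ∧ ∀ x, 0 ≤ x → f x = 0) := by
  have hr_meas : Measurable (fun s => (w s) ^ (-(1:ℝ)/2)) := hw_meas.pow_const _
  have hr : ∀ s, 0 < s → w s * ((w s) ^ (-(1:ℝ)/2)) ^ 2 = 1 := by
    intro s hs
    have hpos : 0 < w s := lt_of_lt_of_le one_pos (hw_ge s hs.le)
    rw [← Real.rpow_natCast, ← Real.rpow_mul hpos.le]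
    norm_num
    rw [Real.rpow_neg_one]
    exact mul_inv_cancel₀ hpos.ne'
  have hFz : ∀ n, F (n + 1) 0 = 0 := by
    intro n
    rw [hFs]; simp
  refine ⟨⟨?_, ?_⟩, ?_⟩
  · intro m
    cases m with
    | zero =>
      have hD : D 0 = fun _ => 0 := funext hD0
      refine ⟨by rw [hD]; exact measurable_const, ?_, ?_⟩
      · simp [hD0]
      · intro x _
        simp [hF0, hD0]
    | succ n =>
      have hD : D (n + 1) = fun s => g n s * (w s) ^ (-(1:ℝ)/2) := funext (hDs n)
      refine ⟨by rw [hD]; exact (hg_meas n).mul hr_meas, ?_, ?_⟩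
      · have h2 : IntegrableOn (fun s => g n s ^ 2) (Ioi 0) := (hg_L2 n).integrable_sq
        refine h2.congr_fun ?_ measurableSet_Ioi
        intro s hs
        simp only [hDs]
        linear_combination (- g n s ^ 2) * hr s hs
      · intro x _
        rw [hFz, hFs, hD, zero_add]
  · intro i j
    cases i with
    | zero =>
      cases j with
      | zero => simp [hF0, hD0]
      | succ n => simp [hFz, hD0]
    | succ m =>
      cases j with
      | zero => simp [hFz, hD0]
      | succ n =>
        have h1 : ∫ s in Ioi (0:ℝ), w s * D (m + 1) s * D (n + 1) s
            = ∫ s in Ioi (0:ℝ), g m s * g n s := by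
          refine setIntegral_congr_fun measurableSet_Ioi ?_
          intro s hs
          simp only [hDs]
          linear_combination (g m s * g n s) * hr s hs
        rw [h1, hg_on, hFz]
        simp
  · rintro f q ⟨hq_meas, hq_int, hf⟩ horth
    have hf0 : f 0 = 0 := by
      have := horth 0
      simpa [hF0, hD0] using this
    have hq : q =ᵐ[volume.restrict (Ioi 0)] 0 := by
      have hmeas : Measurable (fun s => w s * q s * (w s) ^ (-(1:ℝ)/2)) :=
        (hw_meas.mul hq_meas).mul hr_meas
      have hz := hg_total (fun s => w s * q s * (w s) ^ (-(1:ℝ)/2)) ?_ ?_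
      · filter_upwards [hz, ae_restrict_mem measurableSet_Ioi] with s h1 hs
        have h2 : w s * q s * (w s) ^ (-(1:ℝ)/2) = 0 := h1
        show q s = 0
        linear_combination (w s) ^ (-(1:ℝ)/2) * h2 - q s * hr s hs
      · rw [memLp_two_iff_integrable_sq hmeas.aestronglyMeasurable]
        refine IntegrableOn.congr_fun hq_int ?_ measurableSet_Ioi
        intro s hs
        simp only
        linear_combination (- w s * q s ^ 2) * hr s hs
      · intro n
        have h1 := horth (n + 1)
        rw [hf0, zero_mul, zero_add] at h1
        refine Eq.trans ?_ h1
        apply integral_congr_ae; apply Filter.Eventually.of_forall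
        intro s
        simp only [hDs]
        ring
    refine ⟨hf0, hq, ?_⟩
    intro x hx
    rw [hf x hx, hf0, zero_add, intervalIntegral.integral_of_le hx]
    refine integral_eq_zero_of_ae ?_
    exact ae_restrict_of_ae_restrict_of_subset Ioc_subset_Ioi_self hq
end

section
/- Adjoint of the left-shift semigroup on the Filipović space: let (f, p) and (h, q) be w-pairs and t ≥ 0. Define g(x) := h(0) + h(0)·∫₀^{min(x,t)} w(s)⁻¹ ds + ∫₀^{max(x−t,0)} q(r)·(w(r)/w(r+t)) dr and g'(x) := h(0) w(x)⁻¹ 1_{[0,t)}(x) + q(x−t)·(w(x−t)/w(x))·1_{(t,∞)}(x). Then (g, g') is a w-pair with g(0)² + ∫₀^∞ w(x) g'(x)² dx ≤ (1 + K)·(h(0)² + ∫₀^∞ w(x) q(x)² dx), and the duality identity f(t)·h(0) + ∫₀^∞ w(x) p(x+t) q(x) dx = g(0)·f(0) + ∫₀^∞ w(x) p(x) g'(x) dx holds; that is, ⟨S_t f, h⟩_w = ⟨f, g⟩_w where S_t f := f(· + t) is the left shift, so g = S*(t)h. -/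
open MeasureTheory Set

theorem aux_shift_int (t : ℝ) (F : ℝ → ℝ) :
    IntegrableOn (fun x => F (x + t)) (Ioi 0) ↔ IntegrableOn F (Ioi t) := by
  have h := (measurePreserving_add_right (volume : Measure ℝ) t).integrableOn_comp_preimage
    (measurableEmbedding_addRight t) (f := F) (s := Ioi t)
  have e : (fun x => x + t) ⁻¹' Ioi t = Ioi (0:ℝ) := by ext x; simp
  rw [e] at h
  exact h

theorem aux_shift_eq (t : ℝ) (F : ℝ → ℝ) :
    ∫ x in Ioi (0:ℝ), F (x + t) = ∫ x in Ioi t, F x := by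
  have h := (measurePreserving_add_right (volume : Measure ℝ) t).setIntegral_preimage_emb
    (measurableEmbedding_addRight t) F (Ioi t)
  have e : (fun x => x + t) ⁻¹' Ioi t = Ioi (0:ℝ) := by ext x; simp
  rw [e] at h
  exact h

theorem aux_split (t : ℝ) (ht : 0 ≤ t) (F a b : ℝ → ℝ)
    (ha : ∀ x ∈ Ioo 0 t, F x = a x) (hb : ∀ x ∈ Ioi (0:ℝ), F (x + t) = b x)
    (hai : IntegrableOn a (Ioi 0)) (hbi : IntegrableOn b (Ioi 0)) :
    IntegrableOn F (Ioi 0) ∧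
      ∫ x in Ioi (0:ℝ), F x = (∫ x in (0:ℝ)..t, a x) + ∫ x in Ioi (0:ℝ), b x := by
  have h1 : IntegrableOn F (Ioc 0 t) := by
    rw [integrableOn_Ioc_iff_integrableOn_Ioo]
    exact (hai.mono_set (fun x hx => hx.1)).congr_fun (fun x hx => (ha x hx).symm) measurableSet_Ioo
  have h2 : IntegrableOn F (Ioi t) :=
    (aux_shift_int t F).1 (hbi.congr_fun (fun x hx => (hb x hx).symm) measurableSet_Ioi)
  have e : Ioi (0:ℝ) = Ioc 0 t ∪ Ioi t := (Ioc_union_Ioi_eq_Ioi ht).symm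
  refine ⟨by rw [e]; exact h1.union h2, ?_⟩
  have e2 : ∫ x in Ioi (0:ℝ), F x = (∫ x in Ioc 0 t, F x) + ∫ x in Ioi t, F x := by
    rw [e]
    exact setIntegral_union Ioc_disjoint_Ioi_same measurableSet_Ioi h1 h2
  rw [e2, ← aux_shift_eq, intervalIntegral.integral_of_le ht, integral_Ioc_eq_integral_Ioo,
    integral_Ioc_eq_integral_Ioo, setIntegral_congr_fun measurableSet_Ioo ha,
    setIntegral_congr_fun measurableSet_Ioi hb]

theorem aux_L1 (w q : ℝ → ℝ) (hw_ge : ∀ s, 0 ≤ s → 1 ≤ w s)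
    (hw_int : IntegrableOn (fun s => (w s)⁻¹) (Ioi 0)) (hq : Measurable q)
    (hqi : IntegrableOn (fun s => w s * q s ^ 2) (Ioi 0)) : IntegrableOn q (Ioi 0) := by
  refine Integrable.mono' (hqi.add hw_int) hq.aestronglyMeasurable ?_
  refine (ae_restrict_iff' measurableSet_Ioi).2 (Filter.Eventually.of_forall fun x hx => ?_)
  have h1 := hw_ge x (le_of_lt hx)
  have h0 : 0 < w x := by linarith
  simp only [Pi.add_apply, Real.norm_eq_abs]
  have h2 : w x * q x ^ 2 + (w x)⁻¹ - |q x| = (w x)⁻¹ * ((w x * |q x| - 1/2)^2 + 3/4) := by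
    rw [← sq_abs (q x)]; field_simp; ring
  have h3 : 0 ≤ (w x)⁻¹ * ((w x * |q x| - 1/2)^2 + 3/4) := by positivity
  linarith

/-- Adjoint of the left-shift semigroup on the Filipović space: for `w`-pairs
`(f, p)` and `(h, q)` and `t ≥ 0`, the explicitly defined `(g, g')` is a `w`-pair
with `‖g‖_w² ≤ (1 + K)‖h‖_w²` and `⟨S_t f, h⟩_w = ⟨f, g⟩_w`, i.e. `g = S*(t)h`. -/
theorem adjoint_shift
    (w : ℝ → ℝ) (hw_meas : Measurable w) (hw_mono : MonotoneOn w (Ici 0))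
    (hw_ge : ∀ s, 0 ≤ s → 1 ≤ w s) (hw0 : w 0 = 1)
    (hw_int : IntegrableOn (fun s => (w s)⁻¹) (Ioi 0))
    (K : ℝ) (hK : K = ∫ s in Ioi (0:ℝ), (w s)⁻¹)
    (f p h q : ℝ → ℝ) (hfp : IsWPair w f p) (hhq : IsWPair w h q)
    (t : ℝ) (ht : 0 ≤ t)
    (g g' : ℝ → ℝ)
    (hg : ∀ x, g x = h 0 + h 0 * (∫ s in (0:ℝ)..(min x t), (w s)⁻¹)
      + ∫ r in (0:ℝ)..(max (x - t) 0), q r * (w r / w (r + t)))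
    (hg' : ∀ x, g' x = h 0 * (w x)⁻¹ * (Ico (0:ℝ) t).indicator 1 x
      + q (x - t) * (w (x - t) / w x) * (Ioi t).indicator 1 x) :
    IsWPair w g g' ∧
    g 0 ^ 2 + (∫ x in Ioi (0:ℝ), w x * g' x ^ 2)
      ≤ (1 + K) * (h 0 ^ 2 + ∫ x in Ioi (0:ℝ), w x * q x ^ 2) ∧
    f t * h 0 + (∫ x in Ioi (0:ℝ), w x * p (x + t) * q x)
      = g 0 * f 0 + ∫ x in Ioi (0:ℝ), w x * p x * g' x := by
  obtain ⟨hp, hpi, hf⟩ := hfp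
  obtain ⟨hq, hqi, -⟩ := hhq
  have hpos : ∀ x, 0 ≤ x → 0 < w x := fun x hx => by linarith [hw_ge x hx]
  have hle : ∀ x, 0 ≤ x → w x ≤ w (x + t) := fun x hx =>
    hw_mono hx (show (0:ℝ) ≤ x + t by linarith) (by linarith)
  have hp1 := aux_L1 w p hw_ge hw_int hp hpi
  have hq1 := aux_L1 w q hw_ge hw_int hq hqi
  have hg'1 : ∀ x ∈ Ioo 0 t, g' x = h 0 * (w x)⁻¹ := by
    intro x hx
    rw [hg', indicator_of_mem (show x ∈ Ico 0 t from ⟨hx.1.le, hx.2⟩),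
      indicator_of_notMem (by simpa using hx.2.le)]
    simp
  have hg'2 : ∀ x ∈ Ioi (0:ℝ), g' (x + t) = q x * (w x / w (x + t)) := by
    intro x hx
    have hx' : 0 < x := hx
    rw [hg', indicator_of_notMem (by simp [hx'.le]),
      indicator_of_mem (show x + t ∈ Ioi t from by simpa using hx')]
    simp
  have hgm : Measurable g' := by
    have : g' = fun x => h 0 * (w x)⁻¹ * (Ico (0:ℝ) t).indicator 1 x
      + q (x - t) * (w (x - t) / w x) * (Ioi t).indicator 1 x := funext hg'
    rw [this]
    have m1 : Measurable ((Ico (0:ℝ) t).indicator (1 : ℝ → ℝ)) :=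
      measurable_one.indicator measurableSet_Ico
    have m2 : Measurable ((Ioi t).indicator (1 : ℝ → ℝ)) :=
      measurable_one.indicator measurableSet_Ioi
    fun_prop
  have hbm : Measurable fun x => q x * (w x / w (x + t)) := by fun_prop
  have hratio : ∀ x, 0 ≤ x → 0 ≤ w x / w (x + t) ∧ w x / w (x + t) ≤ 1 := fun x hx =>
    ⟨(div_pos (hpos x hx) (hpos _ (by linarith))).le,
      (div_le_one (hpos _ (by linarith))).2 (hle x hx)⟩
  have hb1 : IntegrableOn (fun x => q x * (w x / w (x + t))) (Ioi 0) := by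
    refine Integrable.mono hq1 hbm.aestronglyMeasurable ?_
    refine (ae_restrict_iff' measurableSet_Ioi).2 (Filter.Eventually.of_forall fun x hx => ?_)
    obtain ⟨r0, r1⟩ := hratio x (le_of_lt hx)
    rw [norm_mul, Real.norm_of_nonneg r0]
    exact mul_le_of_le_one_right (norm_nonneg _) r1
  have hg1 := (aux_split t ht g' _ _ hg'1 hg'2 (hw_int.const_mul (h 0)) hb1).1
  -- the squared density
  have hsqle : ∀ x ∈ Ioi (0:ℝ),
      w (x + t) * (q x * (w x / w (x + t))) ^ 2 ≤ w x * q x ^ 2 := by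
    intro x hx
    have hx0 : (0:ℝ) ≤ x := le_of_lt hx
    obtain ⟨r0, r1⟩ := hratio x hx0
    have h1 := hpos x hx0
    have h2 := hpos (x + t) (by linarith)
    have : w (x + t) * (q x * (w x / w (x + t))) ^ 2
        = (w x * q x ^ 2) * (w x / w (x + t)) := by field_simp
    rw [this]
    exact mul_le_of_le_one_right (by positivity) r1
  have hb2 : IntegrableOn (fun x => w (x + t) * (q x * (w x / w (x + t))) ^ 2) (Ioi 0) := by
    refine Integrable.mono' hqi (by fun_prop) ?_
    refine (ae_restrict_iff' measurableSet_Ioi).2 (Filter.Eventually.of_forall fun x hx => ?_)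
    have hx0 : (0:ℝ) < x := hx
    have h2 := hpos (x + t) (by linarith)
    rw [Real.norm_of_nonneg (by positivity)]
    exact hsqle x hx
  have hsq := aux_split t ht (fun x => w x * g' x ^ 2) (fun x => h 0 ^ 2 * (w x)⁻¹) _
    (fun x hx => by
      have := hpos x hx.1.le
      simp only [hg'1 x hx]; field_simp)
    (fun x hx => by simp only [hg'2 x hx]) (hw_int.const_mul (h 0 ^ 2)) hb2
  have hg0 : g 0 = h 0 := by
    rw [hg, min_eq_left ht, max_eq_right (by linarith)]; simp
  have hii : ∀ a b, 0 ≤ a → a ≤ b → IntervalIntegrable g' volume a b := fun a b h0 hab =>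
    (intervalIntegrable_iff_integrableOn_Ioc_of_le hab).2
      (hg1.mono_set (fun x hx => lt_of_le_of_lt h0 hx.1))
  refine ⟨⟨hgm, hsq.1, ?_⟩, ?_, ?_⟩
  · intro x hx
    rw [hg0, hg]
    rcases le_total x t with hxt | hxt
    · rw [min_eq_left hxt, max_eq_right (by linarith), intervalIntegral.integral_same, add_zero,
        ← intervalIntegral.integral_const_mul]
      congr 1
      exact intervalIntegral.integral_congr_Ioo_of_le hx
        fun y hy => (hg'1 y ⟨hy.1, hy.2.trans_le hxt⟩).symm
    · rw [min_eq_right hxt, max_eq_left (by linarith),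
        ← intervalIntegral.integral_const_mul,
        ← intervalIntegral.integral_add_adjacent_intervals (hii 0 t le_rfl ht) (hii t x ht hxt),
        add_assoc]
      congr 2
      · exact intervalIntegral.integral_congr_Ioo_of_le ht fun y hy => (hg'1 y hy).symm
      · have := intervalIntegral.integral_comp_add_right (a := 0) (b := x - t) g' t
        rw [zero_add, sub_add_cancel] at this
        rw [← this]
        exact intervalIntegral.integral_congr_Ioo_of_le (by linarith)
          fun y hy => (hg'2 y hy.1).symm
  · rw [hg0, hsq.2, intervalIntegral.integral_const_mul]
    have k1 : (∫ s in (0:ℝ)..t, (w s)⁻¹) ≤ K := by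
      rw [hK, intervalIntegral.integral_of_le ht]
      refine setIntegral_mono_set hw_int ?_ (Filter.Eventually.of_forall fun x hx => hx.1)
      exact (ae_restrict_iff' measurableSet_Ioi).2 (Filter.Eventually.of_forall fun x hx =>
        (inv_pos.2 (hpos x (le_of_lt hx))).le)
    have k0 : 0 ≤ K := by
      rw [hK]
      exact setIntegral_nonneg measurableSet_Ioi fun x hx => (inv_pos.2 (hpos x (le_of_lt hx))).le
    have k2 := setIntegral_mono_on hb2 hqi measurableSet_Ioi hsqle
    have k3 : 0 ≤ ∫ x in Ioi (0:ℝ), w x * q x ^ 2 :=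
      setIntegral_nonneg measurableSet_Ioi fun x hx => by
        have := hpos x (le_of_lt hx)
        positivity
    have k4 := mul_le_mul_of_nonneg_left k1 (sq_nonneg (h 0))
    have k5 := mul_nonneg k0 k3
    linarith
  · have hpt : IntegrableOn (fun x => w (x + t) * p (x + t) ^ 2) (Ioi 0) :=
      (aux_shift_int t (fun x => w x * p x ^ 2)).2
        (hpi.mono_set (fun x hx => lt_of_le_of_lt ht hx))
    have hb3 : IntegrableOn (fun x => w x * p (x + t) * q x) (Ioi 0) := by
      refine Integrable.mono' (hpt.add hqi) (by fun_prop) ?_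
      refine (ae_restrict_iff' measurableSet_Ioi).2 (Filter.Eventually.of_forall fun x hx => ?_)
      have h1 := hpos x (le_of_lt hx)
      have h2 := hle x (le_of_lt hx)
      simp only [Pi.add_apply, norm_mul, Real.norm_eq_abs, abs_of_pos h1]
      have h3 : w x * p (x + t) ^ 2 ≤ w (x + t) * p (x + t) ^ 2 :=
        mul_le_mul_of_nonneg_right h2 (sq_nonneg _)
      have h4 : |p (x + t)| * |q x| ≤ p (x + t) ^ 2 + q x ^ 2 := by
        rw [← sq_abs (p (x + t)), ← sq_abs (q x)]
        nlinarith [sq_nonneg (|p (x + t)| - |q x|), sq_nonneg (|p (x + t)|), sq_nonneg (|q x|)]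
      have h5 := mul_le_mul_of_nonneg_left h4 h1.le
      linarith
    have hd := aux_split t ht (fun x => w x * p x * g' x) (fun x => h 0 * p x)
      (fun x => w x * p (x + t) * q x)
      (fun x hx => by
        have := hpos x hx.1.le
        simp only [hg'1 x hx]; field_simp)
      (fun x hx => by
        have hx0 : (0:ℝ) < x := hx
        have := hpos (x + t) (by linarith)
        simp only [hg'2 x hx]; field_simp) (hp1.const_mul (h 0)) hb3
    rw [hd.2, hg0, hf t ht, intervalIntegral.integral_const_mul]
    ring
end

section
/- Uniform boundedness of the left-shift semigroup on the Filipović space: for every w-pair (f, p) and every t ≥ 0, the shifted pair (f(·+t), p(·+t)) is again a w-pair, and f(t)² + ∫₀^∞ w(x) p(x+t)² dx ≤ (2 + K) · (f(0)² + ∫₀^∞ w(x) p(x)² dx); that is, ‖S_t f‖_w² ≤ (2 + K)‖f‖_w², uniformly in t ≥ 0. -/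
open MeasureTheory Set

/-- Uniform boundedness of the left-shift semigroup on the Filipović space:
for every `w`-pair `(f, p)` and `t ≥ 0`, the shifted pair is a `w`-pair and
`‖S_t f‖_w² ≤ (2 + K) ‖f‖_w²` with `K = ∫₀^∞ w⁻¹`. -/
theorem shift_semigroup_uniformly_bounded
    (w : ℝ → ℝ) (hw_meas : Measurable w) (hw_mono : MonotoneOn w (Ici 0))
    (hw_ge : ∀ s, 0 ≤ s → 1 ≤ w s) (hw0 : w 0 = 1)
    (hw_int : IntegrableOn (fun s => (w s)⁻¹) (Ioi 0))
    (K : ℝ) (hK : K = ∫ s in Ioi (0:ℝ), (w s)⁻¹)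
    (f p : ℝ → ℝ) (hfp : IsWPair w f p) (t : ℝ) (ht : 0 ≤ t) :
    IsWPair w (fun x => f (x + t)) (fun x => p (x + t)) ∧
    f t ^ 2 + (∫ x in Ioi (0:ℝ), w x * p (x + t) ^ 2)
      ≤ (2 + K) * (f 0 ^ 2 + ∫ x in Ioi (0:ℝ), w x * p x ^ 2) := by
  obtain ⟨hpm, hpi, hf⟩ := hfp
  have hw_pos : ∀ s, 0 ≤ s → 0 < w s := fun s hs => lt_of_lt_of_le one_pos (hw_ge s hs)
  have hKnn : 0 ≤ K := by
    rw [hK]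
    exact setIntegral_nonneg measurableSet_Ioi
      (fun s hs => (inv_pos.2 (hw_pos s (le_of_lt hs))).le)
  have key : ∀ c s, 0 ≤ s → 2 * c * p s ≤ w s * p s ^ 2 + c ^ 2 * (w s)⁻¹ := by
    intro c s hs
    have h := hw_pos s hs
    have h1 : 0 ≤ w s * (p s - c * (w s)⁻¹) ^ 2 := by positivity
    have h2 : w s * (p s - c * (w s)⁻¹) ^ 2
        = w s * p s ^ 2 - 2 * c * p s + c ^ 2 * (w s)⁻¹ := by
      field_simp
      ring
    linarith
  have hp_int : IntegrableOn p (Ioi 0) := by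
    refine Integrable.mono' (hpi.add hw_int) hpm.aestronglyMeasurable ?_
    refine (ae_restrict_iff' measurableSet_Ioi).2 (Filter.Eventually.of_forall fun s hs => ?_)
    have hs0 : (0:ℝ) ≤ s := le_of_lt hs
    have h1 := key 1 s hs0
    have h2 := key (-1) s hs0
    have h3 : 0 ≤ w s * p s ^ 2 := mul_nonneg (hw_pos s hs0).le (sq_nonneg _)
    have h4 : 0 < (w s)⁻¹ := inv_pos.2 (hw_pos s hs0)
    simp only [Pi.add_apply, Real.norm_eq_abs]
    rw [abs_le]
    constructor <;> nlinarith
  have hii : ∀ a b, 0 ≤ a → 0 ≤ b → IntervalIntegrable p volume a b := by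
    intro a b ha hb
    rw [intervalIntegrable_iff]
    exact hp_int.mono_set fun x hx => lt_of_le_of_lt (le_min ha hb) hx.1
  have hsub : Ioi t ⊆ Ioi (0:ℝ) := Ioi_subset_Ioi ht
  have hnn : ∀ s ∈ Ioi (0:ℝ), 0 ≤ w s * p s ^ 2 := fun s hs =>
    mul_nonneg (hw_pos s (le_of_lt hs)).le (sq_nonneg _)
  have hshift : IntegrableOn (fun x => w (x + t) * p (x + t) ^ 2) (Ioi 0) := by
    have h := (measurePreserving_add_right volume t).integrableOn_comp_preimage
      (measurableEmbedding_addRight t) (f := fun s => w s * p s ^ 2) (s := Ioi t)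
    have h' : (fun x => x + t) ⁻¹' Ioi t = Ioi (0:ℝ) := by ext x; simp
    rw [h'] at h
    exact h.2 (hpi.mono_set hsub)
  have hle : ∀ x ∈ Ioi (0:ℝ), w x * p (x + t) ^ 2 ≤ w (x + t) * p (x + t) ^ 2 := by
    intro x hx
    have hx0 : (0:ℝ) ≤ x := le_of_lt hx
    exact mul_le_mul_of_nonneg_right
      (hw_mono hx0 (show (0:ℝ) ≤ x + t by linarith) (by linarith)) (sq_nonneg _)
  have hpt : Measurable fun x => p (x + t) := hpm.comp (measurable_id.add_const t)
  have hsh2 : IntegrableOn (fun x => w x * p (x + t) ^ 2) (Ioi 0) := by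
    refine Integrable.mono' hshift (hw_meas.mul (hpt.pow_const 2)).aestronglyMeasurable ?_
    refine (ae_restrict_iff' measurableSet_Ioi).2 (Filter.Eventually.of_forall fun s hs => ?_)
    rw [Real.norm_of_nonneg (mul_nonneg (hw_pos s (le_of_lt hs)).le (sq_nonneg _))]
    exact hle s hs
  refine ⟨⟨hpt, hsh2, ?_⟩, ?_⟩
  · intro x hx
    have h1 := hf (x + t) (by linarith)
    have h2 := hf t ht
    have h3 := intervalIntegral.integral_add_adjacent_intervals
      (hii 0 t le_rfl ht) (hii t (x + t) ht (by linarith))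
    simp only [zero_add]
    rw [intervalIntegral.integral_comp_add_right, zero_add]
    linarith
  · set I := ∫ x in Ioi (0:ℝ), w x * p x ^ 2 with hI
    have hJ : (∫ x in Ioi (0:ℝ), w x * p (x + t) ^ 2) ≤ I := by
      calc _ ≤ ∫ x in Ioi (0:ℝ), w (x + t) * p (x + t) ^ 2 :=
            setIntegral_mono_on hsh2 hshift measurableSet_Ioi hle
        _ = ∫ x in Ioi t, w x * p x ^ 2 := by
            have h := (measurePreserving_add_right volume t).setIntegral_preimage_emb
              (measurableEmbedding_addRight t) (fun s => w s * p s ^ 2) (Ioi t)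
            have h' : (fun x => x + t) ⁻¹' Ioi t = Ioi (0:ℝ) := by ext x; simp
            rw [h'] at h
            exact h
        _ ≤ I := setIntegral_mono_set hpi
            ((ae_restrict_iff' measurableSet_Ioi).2 (Filter.Eventually.of_forall hnn))
            hsub.eventuallyLE
    have hb : ∀ c, 2 * c * (∫ s in (0:ℝ)..t, p s) ≤ I + c ^ 2 * K := by
      intro c
      have hs2 : Ioc 0 t ⊆ Ioi (0:ℝ) := fun x hx => hx.1
      have hG : IntegrableOn (fun s => w s * p s ^ 2 + c ^ 2 * (w s)⁻¹) (Ioi 0) :=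
        hpi.add (hw_int.const_mul _)
      rw [intervalIntegral.integral_of_le ht, ← integral_const_mul]
      calc _ ≤ ∫ s in Ioc 0 t, (w s * p s ^ 2 + c ^ 2 * (w s)⁻¹) :=
            setIntegral_mono_on ((hp_int.mono_set hs2).const_mul _) (hG.mono_set hs2)
              measurableSet_Ioc (fun s hs => key c s hs.1.le)
        _ ≤ ∫ s in Ioi 0, (w s * p s ^ 2 + c ^ 2 * (w s)⁻¹) := by
            refine setIntegral_mono_set hG
              ((ae_restrict_iff' measurableSet_Ioi).2 (Filter.Eventually.of_forall ?_))
              hs2.eventuallyLE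
            intro s hs
            exact add_nonneg (hnn s hs)
              (mul_nonneg (sq_nonneg _) (inv_pos.2 (hw_pos s (le_of_lt hs))).le)
        _ = I + c ^ 2 * K := by
            rw [integral_add hpi (hw_int.const_mul _), integral_const_mul, hK]
    have hft := hf t ht
    generalize (∫ s in (0:ℝ)..t, p s) = b at hb hft
    have hK1 : 0 < 1 + K := by linarith
    obtain ⟨c, hc⟩ : ∃ c, c * (1 + K) = f t := ⟨f t / (1 + K), by field_simp⟩
    have h1 := hb c
    have h2 : 2 * c * f 0 ≤ f 0 ^ 2 + c ^ 2 := by nlinarith [sq_nonneg (f 0 - c)]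
    have h3 : c ^ 2 * (1 + K) ≤ f 0 ^ 2 + I := by
      have : 2 * c * (c * (1 + K)) = 2 * c * (f 0 + b) := by rw [hc, hft]
      nlinarith
    have h4 : f t ^ 2 ≤ (1 + K) * (f 0 ^ 2 + I) := by
      have := mul_le_mul_of_nonneg_left h3 hK1.le
      rw [← hc]
      nlinarith
    nlinarith [sq_nonneg (f 0)]
end

section
/- Strong continuity of the left-shift semigroup on the Filipović space: for every w-pair (f, p), the quantity ‖S_t f − f‖_w² = (f(t) − f(0))² + ∫₀^∞ w(x)(p(x+t) − p(x))² dx tends to 0 as t → 0⁺. -/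
open MeasureTheory Set Filter

lemma aux_trans (q : ℝ → ℝ) (hq : MemLp q 2 volume) :
    Tendsto (fun t : ℝ => ∫ x, (q (x + t) - q x) ^ 2) (nhds 0) (nhds 0) := by
  have hm : ∀ t : ℝ, MemLp (fun x => q (t + x)) 2 volume := fun t =>
    hq.comp_measurePreserving (measurePreserving_add_left volume t)
  have : Fact ((2 : ENNReal) ≠ ⊤) := ⟨by simp⟩
  have h1 : Tendsto (fun t : ℝ => (DomAddAct.mk t) +ᵥ hq.toLp q) (nhds 0)
      (nhds ((DomAddAct.mk (0:ℝ)) +ᵥ hq.toLp q)) := by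
    have : Continuous (fun t : ℝ => (DomAddAct.mk t) +ᵥ hq.toLp q) := by
      have h2 : Continuous (fun t : ℝ => DomAddAct.mk t) := DomAddAct.continuous_mk
      exact h2.vadd continuous_const
    exact this.tendsto 0
  have h0 : (DomAddAct.mk (0:ℝ)) +ᵥ hq.toLp q = hq.toLp q := by
    change (hm 0).toLp _ = _
    congr 1
    ext x
    simp
  rw [h0] at h1
  change Tendsto (fun t : ℝ => (hm t).toLp _) _ _ at h1
  rw [Lp.tendsto_Lp_iff_tendsto_eLpNorm''] at h1
  have h3 := ((ENNReal.continuousAt_toReal ENNReal.zero_ne_top).tendsto.comp h1).pow 2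
  simp only [ENNReal.toReal_zero, ne_eq, OfNat.ofNat_ne_zero, not_false_eq_true, zero_pow] at h3
  refine h3.congr fun t => ?_
  have hd := (hm t).sub hq
  simp only [Function.comp]
  have hn : 0 ≤ ∫ x, (q (x + t) - q x) ^ 2 := integral_nonneg fun x => sq_nonneg _
  rw [hd.eLpNorm_eq_integral_rpow_norm (by simp) (by simp)]
  have e : ∫ a, ‖((fun x => q (t + x)) - q) a‖ ^ (2 : ENNReal).toReal
      = ∫ x, (q (x + t) - q x) ^ 2 := by
    congr 1; ext x
    simp [add_comm]
  rw [e, ENNReal.toReal_ofReal (by positivity), ← Real.rpow_natCast, ← Real.rpow_mul hn]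
  simp

theorem shift_semigroup_strongly_continuous
    (w : ℝ → ℝ) (hw_meas : Measurable w) (hw_mono : MonotoneOn w (Ici 0))
    (hw_ge : ∀ s, 0 ≤ s → 1 ≤ w s) (hw0 : w 0 = 1)
    (hw_int : IntegrableOn (fun s => (w s)⁻¹) (Ioi 0))
    (f p : ℝ → ℝ) (hfp : IsWPair w f p) :
    Tendsto (fun t => (f t - f 0) ^ 2 + ∫ x in Ioi (0:ℝ), w x * (p (x + t) - p x) ^ 2)
      (nhdsWithin 0 (Ioi 0)) (nhds 0) := by
  obtain ⟨hp, hI, hf⟩ := hfp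
  have hA : Tendsto (fun t => (f t - f 0) ^ 2) (nhdsWithin 0 (Ioi 0)) (nhds 0) := by
    have hpi : IntegrableOn p (Ioc 0 1) := by
      have hb : IntegrableOn (fun s => 1 + w s * p s ^ 2) (Ioc 0 1) :=
        Integrable.add (by simp) (hI.mono_set Ioc_subset_Ioi_self)
      refine Integrable.mono' hb hp.aestronglyMeasurable ?_
      refine (ae_restrict_iff' measurableSet_Ioc).2 (ae_of_all _ fun s hs => ?_)
      have := hw_ge s hs.1.le
      rw [Real.norm_eq_abs, abs_le]
      constructor <;> nlinarith [sq_nonneg (p s + 1), sq_nonneg (p s - 1), sq_nonneg (p s)]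
    have hii : IntervalIntegrable p volume 0 1 :=
      (intervalIntegrable_iff_integrableOn_Ioc_of_le zero_le_one).2 hpi
    have hc := intervalIntegral.continuousOn_primitive_interval' hii (left_mem_uIcc)
    have h0 := (hc 0 left_mem_uIcc).tendsto
    rw [uIcc_of_le zero_le_one, intervalIntegral.integral_same] at h0
    have h1 : Tendsto (fun b => ∫ x in (0:ℝ)..b, p x) (nhdsWithin 0 (Ioi 0)) (nhds 0) := by
      refine h0.mono_left ?_
      rw [← nhdsWithin_Ioc_eq_nhdsGT (zero_lt_one' ℝ)]
      exact nhdsWithin_mono _ Ioc_subset_Icc_self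
    have h2 := h1.pow 2
    simp only [ne_eq, OfNat.ofNat_ne_zero, not_false_eq_true, zero_pow] at h2
    refine h2.congr' ?_
    filter_upwards [self_mem_nhdsWithin] with t ht
    rw [hf t (le_of_lt ht)]
    ring
  set q : ℝ → ℝ := (Ioi (0:ℝ)).indicator (fun s => √(w s) * p s) with hqd
  have hqm : Measurable q := (hw_meas.sqrt.mul hp).indicator measurableSet_Ioi
  have hqv : ∀ x, 0 < x → q x = √(w x) * p x := fun x hx => indicator_of_mem hx _
  have hq2 : (fun x => q x ^ 2) = (Ioi (0:ℝ)).indicator (fun s => w s * p s ^ 2) := by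
    ext x
    by_cases hx : 0 < x
    · rw [hqv x hx, indicator_of_mem (by exact hx), mul_pow,
        Real.sq_sqrt (by linarith [hw_ge x hx.le])]
    · simp [hqd, hx]
  have hqi : Integrable (fun x => q x ^ 2) := by
    rw [hq2]; exact (integrable_indicator_iff measurableSet_Ioi).2 hI
  have hqL : MemLp q 2 volume := (memLp_two_iff_integrable_sq hqm.aestronglyMeasurable).2 hqi
  have hT := (aux_trans q hqL).mono_left (nhdsWithin_le_nhds (s := Ioi 0))
  set r : ℝ → ℝ → ℝ := fun t x => √(w x) / √(w (x + t)) with hr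
  have hr01 : ∀ t x, 0 < t → 0 < x → 0 ≤ r t x ∧ r t x ≤ 1 := by
    intro t x ht hx
    refine ⟨by positivity, div_le_one_of_le₀ (Real.sqrt_le_sqrt ?_) (by positivity)⟩
    exact hw_mono hx.le (by simp; linarith) (by linarith)
  have hrm : ∀ t, Measurable (r t) := fun t =>
    hw_meas.sqrt.div ((hw_meas.comp (measurable_id.add_const t)).sqrt)
  have hD : Tendsto (fun t => ∫ x in Ioi (0:ℝ), (1 - r t x) ^ 2 * q x ^ 2)
      (nhdsWithin 0 (Ioi 0)) (nhds 0) := by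
    suffices h : Tendsto (fun t => ∫ x in Ioi (0:ℝ), (1 - r t x) ^ 2 * q x ^ 2)
        (nhdsWithin 0 (Ioi 0)) (nhds (∫ x in Ioi (0:ℝ), (fun _ => (0:ℝ)) x)) by
      simpa using h
    refine tendsto_integral_filter_of_dominated_convergence (fun x => q x ^ 2) ?_ ?_
      hqi.integrableOn ?_
    · exact Eventually.of_forall fun t =>
        (((measurable_const.sub (hrm t)).pow_const 2).mul
          (hqm.pow_const 2)).aestronglyMeasurable
    · filter_upwards [self_mem_nhdsWithin] with t ht
      refine (ae_restrict_iff' measurableSet_Ioi).2 (ae_of_all _ fun x hx => ?_)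
      obtain ⟨a, b⟩ := hr01 t x ht hx
      rw [Real.norm_of_nonneg (by positivity)]
      exact mul_le_of_le_one_left (sq_nonneg _) (by nlinarith)
    · rw [ae_restrict_iff' measurableSet_Ioi]
      filter_upwards [hw_mono.countable_not_continuousWithinAt.ae_notMem volume] with x hx hx0
      have hx0' : (0:ℝ) < x := hx0
      have hcw : ContinuousWithinAt w (Ici 0) x := by
        by_contra h
        exact hx ⟨hx0'.le, h⟩
      have hca : ContinuousAt w x := hcw.continuousAt (Ici_mem_nhds hx0')
      have hw1 := hw_ge x hx0'.le
      have hsp : 0 < √(w x) := Real.sqrt_pos.2 (by linarith)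
      have h1 : Tendsto (fun t : ℝ => x + t) (nhdsWithin 0 (Ioi 0)) (nhds x) := by
        have : Tendsto (fun t : ℝ => x + t) (nhds 0) (nhds (x + 0)) :=
          (continuous_const.add continuous_id).tendsto 0
        rw [add_zero] at this
        exact this.mono_left nhdsWithin_le_nhds
      have h2 := (hca.tendsto.comp h1).sqrt
      have h3 : Tendsto (fun t => r t x) (nhdsWithin 0 (Ioi 0)) (nhds (√(w x) / √(w x))) :=
        tendsto_const_nhds.div h2 hsp.ne'
      rw [div_self hsp.ne'] at h3
      have h4 := (((tendsto_const_nhds (x := (1:ℝ))).sub h3).pow 2).mul_const (q x ^ 2)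
      simpa using h4
  have hB : Tendsto (fun t => ∫ x in Ioi (0:ℝ), w x * (p (x + t) - p x) ^ 2)
      (nhdsWithin 0 (Ioi 0)) (nhds 0) := by
    have hS := (hT.const_mul 2).add (hD.const_mul 2)
    simp only [mul_zero, add_zero] at hS
    refine tendsto_of_tendsto_of_tendsto_of_le_of_le' tendsto_const_nhds hS ?_ ?_
    · refine Eventually.of_forall fun t => setIntegral_nonneg measurableSet_Ioi fun x hx => ?_
      have := hw_ge x (le_of_lt hx)
      positivity
    · filter_upwards [self_mem_nhdsWithin] with t ht
      have ht' : (0:ℝ) < t := ht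
      have i1 : Integrable (fun x => (q (x + t) - q x) ^ 2) :=
        ((hqL.comp_measurePreserving (measurePreserving_add_right volume t)).sub hqL).integrable_sq
      have i2 : IntegrableOn (fun x => (1 - r t x) ^ 2 * q x ^ 2) (Ioi 0) := by
        refine Integrable.mono' hqi.integrableOn (((measurable_const.sub (hrm t)).pow_const 2).mul
          (hqm.pow_const 2)).aestronglyMeasurable ?_
        refine (ae_restrict_iff' measurableSet_Ioi).2 (ae_of_all _ fun x hx => ?_)
        obtain ⟨a, b⟩ := hr01 t x ht hx
        rw [Real.norm_of_nonneg (by positivity)]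
        exact mul_le_of_le_one_left (sq_nonneg _) (by nlinarith)
      have l1 : ∫ x in Ioi (0:ℝ), (q (x + t) - q x) ^ 2 ≤ ∫ x, (q (x + t) - q x) ^ 2 :=
        setIntegral_le_integral i1 (ae_of_all _ fun x => sq_nonneg _)
      have l2 : ∫ x in Ioi (0:ℝ), w x * (p (x + t) - p x) ^ 2 ≤
          ∫ x in Ioi (0:ℝ), (2 * (q (x + t) - q x) ^ 2 + 2 * ((1 - r t x) ^ 2 * q x ^ 2)) := by
        refine integral_mono_of_nonneg ?_ ((i1.integrableOn.const_mul 2).add (i2.const_mul 2)) ?_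
        · refine (ae_restrict_iff' measurableSet_Ioi).2 (ae_of_all _ fun x hx => ?_)
          have := hw_ge x (le_of_lt hx)
          simp only [Pi.zero_apply]
          positivity
        · refine (ae_restrict_iff' measurableSet_Ioi).2 (ae_of_all _ fun x hx => ?_)
          have hx' : (0:ℝ) < x := hx
          obtain ⟨a, b⟩ := hr01 t x ht hx
          have hw1 := hw_ge x hx'.le
          have hw2 := hw_ge (x + t) (by linarith)
          have hs2 : 0 < √(w (x + t)) := Real.sqrt_pos.2 (by linarith)
          have e1 : √(w x) * p (x + t) = r t x * q (x + t) := by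
            rw [hqv (x + t) (by linarith)]
            simp only [hr]
            field_simp
          have e2 : w x * (p (x + t) - p x) ^ 2
              = (r t x * (q (x + t) - q x) - (1 - r t x) * q x) ^ 2 := by
            have : r t x * (q (x + t) - q x) - (1 - r t x) * q x
                = √(w x) * (p (x + t) - p x) := by
              rw [mul_sub, mul_sub, e1, ← hqv x hx']; ring
            rw [this, mul_pow, Real.sq_sqrt (by linarith)]
          simp only [e2]
          have e3 : (r t x * (q (x + t) - q x)) ^ 2 ≤ (q (x + t) - q x) ^ 2 := by
            rw [mul_pow]
            exact mul_le_of_le_one_left (sq_nonneg _) (by nlinarith)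
          rw [← mul_pow]
          nlinarith [sq_nonneg (r t x * (q (x + t) - q x) + (1 - r t x) * q x)]
      rw [integral_add (i1.integrableOn.const_mul 2) (i2.const_mul 2), integral_const_mul,
        integral_const_mul] at l2
      linarith
  simpa using hA.add hB
end

section
/- Fourier representation of the call payoff: let K > 0, ν > 1 and y ∈ ℝ. Then the function λ ↦ g(λ)·e^{(ν+iλ)y}, where g(λ) := K^{−(ν−1+iλ)} / ((ν+iλ)(ν−1+iλ)), is absolutely integrable on ℝ, and (1/(2π)) ∫_ℝ g(λ) e^{(ν+iλ)y} dλ = max(e^y − K, 0). -/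
open MeasureTheory Complex

open FourierTransform in
theorem aux_main (ν : ℝ) (hν : 1 < ν) (x : ℝ) :
    Integrable (fun l : ℝ => Complex.exp (Complex.I * l * x) /
      (((ν : ℂ) + Complex.I * l) * ((ν : ℂ) - 1 + Complex.I * l))) ∧
    ∫ l : ℝ, Complex.exp (Complex.I * l * x) /
      (((ν : ℂ) + Complex.I * l) * ((ν : ℂ) - 1 + Complex.I * l)) =
      2 * Real.pi * (Complex.exp (-((ν : ℂ) - 1) * (max x 0 : ℝ)) -
        Complex.exp (-(ν : ℂ) * (max x 0 : ℝ))) := by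
  have h1 : ∀ l : ℝ, (ν : ℂ) + Complex.I * l ≠ 0 := fun l h => by
    have := congrArg Complex.re h
    simp at this; linarith
  have h2 : ∀ l : ℝ, (ν : ℂ) - 1 + Complex.I * l ≠ 0 := fun l h => by
    have := congrArg Complex.re h
    simp at this; linarith
  have hint : ∀ x : ℝ, Integrable (fun l : ℝ => Complex.exp (Complex.I * l * x) /
      (((ν : ℂ) + Complex.I * l) * ((ν : ℂ) - 1 + Complex.I * l))) := by
    intro x
    have hc : Continuous (fun l : ℝ => Complex.exp (Complex.I * l * x) /
      (((ν : ℂ) + Complex.I * l) * ((ν : ℂ) - 1 + Complex.I * l))) := by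
      refine Continuous.div (by fun_prop) (by fun_prop) fun l => mul_ne_zero (h1 l) (h2 l)
    refine (integrable_inv_one_add_sq.const_mul (1 + 1 / (ν - 1) ^ 2)).mono'
      hc.aestronglyMeasurable (Filter.Eventually.of_forall fun l => ?_)
    have e1 : ‖Complex.exp (Complex.I * l * x)‖ = 1 := by
      rw [Complex.norm_exp]; simp
    have ha : 0 < ν - 1 := by linarith
    have hs : ‖(ν : ℂ) - 1 + Complex.I * l‖ ^ 2 = (ν - 1) ^ 2 + l ^ 2 := by
      rw [← Complex.normSq_eq_norm_sq, Complex.normSq_apply]; simp; ring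
    have hs' : ‖(ν : ℂ) + Complex.I * l‖ ^ 2 = ν ^ 2 + l ^ 2 := by
      rw [← Complex.normSq_eq_norm_sq, Complex.normSq_apply]; simp; ring
    have hle : ‖(ν : ℂ) - 1 + Complex.I * l‖ ≤ ‖(ν : ℂ) + Complex.I * l‖ := by
      refine le_of_sq_le_sq ?_ (norm_nonneg _)
      rw [hs, hs']; nlinarith
    rw [norm_div, norm_mul, e1]
    have hp : (ν - 1) ^ 2 + l ^ 2 ≤
        ‖(ν : ℂ) + Complex.I * l‖ * ‖(ν : ℂ) - 1 + Complex.I * l‖ := by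
      rw [← hs, sq]; gcongr
    have hpos : 0 < (ν - 1) ^ 2 + l ^ 2 := by positivity
    calc _ ≤ 1 / ((ν - 1) ^ 2 + l ^ 2) := by gcongr
      _ ≤ _ := by
        rw [← div_eq_mul_inv, div_le_div_iff₀ hpos (by positivity)]
        have : (1 + 1 / (ν - 1) ^ 2) * ((ν - 1) ^ 2 + l ^ 2)
          = (ν - 1) ^ 2 + l ^ 2 + 1 + l ^ 2 / (ν - 1) ^ 2 := by
          field_simp; ring
        rw [this]
        have : 0 ≤ l ^ 2 / (ν - 1) ^ 2 := by positivity
        nlinarith [sq_nonneg (ν - 1)]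
  refine ⟨hint x, ?_⟩
  set f : ℝ → ℂ := fun t => Complex.exp (-((ν : ℂ) - 1) * (max t 0 : ℝ)) -
        Complex.exp (-(ν : ℂ) * (max t 0 : ℝ)) with hf
  have hfc : Continuous f := by fun_prop
  have hf0 : ∀ t, t ∉ Set.Ioi (0:ℝ) → f t = 0 := by
    intro t ht
    have : max t 0 = 0 := max_eq_right (by simpa using ht)
    simp [hf, this]
  have hfp : ∀ t ∈ Set.Ioi (0:ℝ), f t = Complex.exp (-((ν : ℂ) - 1) * t) -
        Complex.exp (-(ν : ℂ) * t) := by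
    intro t ht
    have : max t 0 = t := max_eq_left (le_of_lt ht)
    simp [hf, this]
  have hfi : Integrable f := by
    rw [← integrableOn_iff_integrable_of_support_subset (s := Set.Ioi (0:ℝ))
      (fun t ht => by by_contra h; exact ht (hf0 t h))]
    refine IntegrableOn.congr_fun ?_ (fun t ht => (hfp t ht).symm) measurableSet_Ioi
    exact (integrableOn_exp_mul_complex_Ioi (by simp; linarith) 0).sub
      (integrableOn_exp_mul_complex_Ioi (by simp; linarith) 0)
  have hF : ∀ w : ℝ, 𝓕 f w = 1 / (((ν : ℂ) + Complex.I * (2 * Real.pi * w : ℝ)) *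
      ((ν : ℂ) - 1 + Complex.I * (2 * Real.pi * w : ℝ))) := by
    intro w
    rw [Real.fourier_real_eq_integral_exp_smul,
      ← setIntegral_eq_integral_of_forall_compl_eq_zero (s := Set.Ioi (0:ℝ))
      (fun t ht => by rw [hf0 t ht, smul_zero])]
    set W : ℂ := Complex.I * (2 * Real.pi * w : ℝ) with hW
    have hre : W.re = 0 := by simp [hW]
    have k1 : (-((ν : ℂ) - 1 + W)).re < 0 := by simp [hre]; linarith
    have k2 : (-((ν : ℂ) + W)).re < 0 := by simp [hre]; linarith
    have : ∫ t in Set.Ioi (0:ℝ), Complex.exp (((-2 * Real.pi * t * w : ℝ) : ℂ) * Complex.I) • f t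
        = ∫ t in Set.Ioi (0:ℝ), (Complex.exp (-((ν : ℂ) - 1 + W) * t) -
          Complex.exp (-((ν : ℂ) + W) * t)) := by
      refine setIntegral_congr_fun measurableSet_Ioi fun t ht => ?_
      simp only [hfp t ht, smul_eq_mul, mul_sub, ← Complex.exp_add, hW]
      push_cast
      congr 2 <;> ring
    rw [this, integral_sub (integrableOn_exp_mul_complex_Ioi k1 0)
      (integrableOn_exp_mul_complex_Ioi k2 0), integral_exp_mul_complex_Ioi k1,
      integral_exp_mul_complex_Ioi k2]
    have n1 := h1 (2 * Real.pi * w)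
    have n2 := h2 (2 * Real.pi * w)
    rw [← hW] at n1 n2
    simp only [Complex.ofReal_zero, mul_zero, Complex.exp_zero]
    rw [neg_div_neg_eq, neg_div_neg_eq]
    field_simp
    ring
  have hFi : Integrable (𝓕 f) := by
    have := (hint 0).comp_mul_left' (R := 2 * Real.pi) (by positivity)
    refine this.congr (Filter.Eventually.of_forall fun w => ?_)
    simp [hF]
  have inv := congrFun (hfc.fourierInv_fourier_eq hfi hFi) x
  rw [Real.fourierInv_eq'] at inv
  change _ = 2 * Real.pi * f x
  rw [← inv]
  have cv := Measure.integral_comp_mul_left (fun l : ℝ => Complex.exp (Complex.I * l * x) /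
      (((ν : ℂ) + Complex.I * l) * ((ν : ℂ) - 1 + Complex.I * l))) (2 * Real.pi)
  have : ∫ v : ℝ, Complex.exp (((2 * Real.pi * inner ℝ v x : ℝ) : ℂ) * Complex.I) • 𝓕 f v =
     ∫ v : ℝ, Complex.exp (Complex.I * (2 * Real.pi * v : ℝ) * x) /
      (((ν : ℂ) + Complex.I * (2 * Real.pi * v : ℝ)) *
        ((ν : ℂ) - 1 + Complex.I * (2 * Real.pi * v : ℝ))) := by
    congr 1
    ext v
    rw [hF, smul_eq_mul, mul_one_div]
    congr 2
    simp
    ring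
  rw [this, cv, abs_of_pos (by positivity), Complex.real_smul]
  have hp : (Real.pi : ℂ) ≠ 0 := by exact_mod_cast Real.pi_ne_zero
  have hq : (2 * Real.pi : ℂ) ≠ 0 := mul_ne_zero two_ne_zero hp
  rw [← mul_assoc, Complex.ofReal_inv, Complex.ofReal_mul, Complex.ofReal_ofNat,
    mul_inv_cancel₀ hq, one_mul]

/-- Fourier representation of the call payoff: for `K > 0`, `ν > 1`, `y ∈ ℝ`,
the function `λ ↦ g(λ) e^{(ν+iλ)y}` with
`g(λ) = K^{−(ν−1+iλ)} / ((ν+iλ)(ν−1+iλ))` is Lebesgue integrable on `ℝ` and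
`(1/(2π)) ∫_ℝ g(λ) e^{(ν+iλ)y} dλ = (e^y − K)⁺`. -/
theorem call_payoff_fourier
    (K : ℝ) (hK : 0 < K) (ν : ℝ) (hν : 1 < ν) (y : ℝ)
    (g : ℝ → ℂ)
    (hg : ∀ l : ℝ, g l =
      Complex.exp (-(((ν : ℂ) - 1 + Complex.I * l)) * (Real.log K : ℂ)) /
        (((ν : ℂ) + Complex.I * l) * ((ν : ℂ) - 1 + Complex.I * l))) :
    Integrable (fun l : ℝ => g l * Complex.exp (((ν : ℂ) + Complex.I * l) * y)) ∧
    (1 / (2 * Real.pi) : ℂ) *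
        ∫ l : ℝ, g l * Complex.exp (((ν : ℂ) + Complex.I * l) * y)
      = ((max (Real.exp y - K) 0 : ℝ) : ℂ) := by
  set x := y - Real.log K with hx
  obtain ⟨hi, he⟩ := aux_main ν hν x
  have key : (fun l : ℝ => g l * Complex.exp (((ν : ℂ) + Complex.I * l) * y)) =
      fun l : ℝ => Complex.exp (Real.log K + ν * x) * (Complex.exp (Complex.I * l * x) /
      (((ν : ℂ) + Complex.I * l) * ((ν : ℂ) - 1 + Complex.I * l))) := by
    ext l
    rw [hg, div_mul_eq_mul_div, mul_div_assoc', ← Complex.exp_add, ← Complex.exp_add]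
    congr 2
    rw [hx]; push_cast; ring
  rw [key]
  refine ⟨hi.const_mul _, ?_⟩
  rw [integral_const_mul, he]
  have hp : (Real.pi : ℂ) ≠ 0 := by exact_mod_cast Real.pi_ne_zero
  have : ((1 : ℂ) / (2 * Real.pi)) * (Complex.exp (Real.log K + ν * x) *
      (2 * Real.pi * (Complex.exp (-((ν : ℂ) - 1) * (max x 0 : ℝ)) -
        Complex.exp (-(ν : ℂ) * (max x 0 : ℝ))))) = Complex.exp (Real.log K + ν * x) *
      (Complex.exp (-((ν : ℂ) - 1) * (max x 0 : ℝ)) -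
        Complex.exp (-(ν : ℂ) * (max x 0 : ℝ))) := by
    field_simp
  rw [this]
  rcases le_total x 0 with h | h
  · have : Real.exp y ≤ K := (Real.le_log_iff_exp_le hK).1 (by linarith)
    rw [max_eq_right h, max_eq_right (by linarith)]
    simp
  · have : K ≤ Real.exp y := (Real.log_le_iff_le_exp hK).1 (by linarith)
    rw [max_eq_left h, max_eq_left (by linarith), mul_sub, ← Complex.exp_add, ← Complex.exp_add]
    have a1 : (Real.log K : ℂ) + ν * x + -((ν : ℂ) - 1) * x = (y : ℝ) := by
      rw [hx]; push_cast; ring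
    have a2 : (Real.log K : ℂ) + ν * x + -(ν : ℂ) * x = (Real.log K : ℝ) := by ring
    rw [a1, a2, ← Complex.ofReal_exp, ← Complex.ofReal_exp, Real.exp_log hK]
    push_cast; rfl
end

section
/- Fourier representation of the put payoff: let K > 0, ν < 0 and y ∈ ℝ. Then the function λ ↦ g(λ)·e^{(ν+iλ)y}, where g(λ) := K^{−(ν−1+iλ)} / ((ν+iλ)(ν−1+iλ)), is absolutely integrable on ℝ, and (1/(2π)) ∫_ℝ g(λ) e^{(ν+iλ)y} dλ = max(K − e^y, 0). -/
open MeasureTheory Complex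

lemma put_aux_exp_integrable (c : ℂ) (k : ℝ) (hc : 0 < c.re) :
    IntegrableOn (fun x : ℝ => Complex.exp (c * x)) (Set.Iic k) ∧
    ∫ x in Set.Iic k, Complex.exp (c * x) = Complex.exp (c * k) / c :=
  ⟨integrableOn_exp_mul_complex_Iic hc k, integral_exp_mul_complex_Iic hc k⟩

/-- Fourier representation of the put payoff: for `K > 0`, `ν < 0`, `y ∈ ℝ`,
the function `λ ↦ g(λ) e^{(ν+iλ)y}` with
`g(λ) = K^{−(ν−1+iλ)} / ((ν+iλ)(ν−1+iλ))` is Lebesgue integrable on `ℝ` and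
`(1/(2π)) ∫_ℝ g(λ) e^{(ν+iλ)y} dλ = (K − e^y)⁺`. -/
theorem put_payoff_fourier
    (K : ℝ) (hK : 0 < K) (ν : ℝ) (hν : ν < 0) (y : ℝ)
    (g : ℝ → ℂ)
    (hg : ∀ l : ℝ, g l =
      Complex.exp (-(((ν : ℂ) - 1 + Complex.I * l)) * (Real.log K : ℂ)) /
        (((ν : ℂ) + Complex.I * l) * ((ν : ℂ) - 1 + Complex.I * l))) :
    Integrable (fun l : ℝ => g l * Complex.exp (((ν : ℂ) + Complex.I * l) * y)) ∧
    (1 / (2 * Real.pi) : ℂ) *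
        ∫ l : ℝ, g l * Complex.exp (((ν : ℂ) + Complex.I * l) * y)
      = ((max (K - Real.exp y) 0 : ℝ) : ℂ) := by
  have hz : ∀ l : ℝ, (ν : ℂ) + Complex.I * l ≠ 0 := by
    intro l h
    have := congrArg Complex.re h
    simp at this
    linarith
  have hz1 : ∀ l : ℝ, (ν : ℂ) - 1 + Complex.I * l ≠ 0 := by
    intro l h
    have := congrArg Complex.re h
    simp at this
    linarith
  have hgc : Continuous g := by
    rw [funext hg]
    exact Continuous.div (by fun_prop) (by fun_prop) (fun l => mul_ne_zero (hz l) (hz1 l))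
  -- norm bound
  have hgi : Integrable g := by
    set m : ℝ := min 1 (ν ^ 2) with hm
    have hm0 : 0 < m := lt_min one_pos (by nlinarith)
    refine Integrable.mono' (integrable_inv_one_add_sq.const_mul
      (Real.exp (-(ν - 1) * Real.log K) * m⁻¹)) hgc.aestronglyMeasurable
      (Filter.Eventually.of_forall fun l => ?_)
    rw [hg, norm_div, Complex.norm_exp, mul_assoc, div_eq_mul_inv]
    have e1 : (-(((ν : ℂ) - 1 + Complex.I * l)) * (Real.log K : ℂ)).re
        = -(ν - 1) * Real.log K := by simp
    rw [e1, ← mul_inv]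
    refine mul_le_mul_of_nonneg_left ?_ (Real.exp_pos _).le
    refine inv_anti₀ (by positivity) ?_
    rw [norm_mul]
    have a0 : ‖(ν : ℂ) + Complex.I * l‖ ^ 2 = ν ^ 2 + l ^ 2 := by
      rw [← Complex.normSq_eq_norm_sq, Complex.normSq_apply]; simp; ring
    have a1 : ‖(ν : ℂ) - 1 + Complex.I * l‖ ^ 2 = (ν - 1) ^ 2 + l ^ 2 := by
      rw [← Complex.normSq_eq_norm_sq, Complex.normSq_apply]; simp; ring
    have a2 : ‖(ν : ℂ) + Complex.I * l‖ ≤ ‖(ν : ℂ) - 1 + Complex.I * l‖ :=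
      (pow_le_pow_iff_left₀ (norm_nonneg _) (norm_nonneg _) two_ne_zero).1 (by rw [a0, a1]; nlinarith)
    have a3 : m * (1 + l ^ 2) ≤ ‖(ν : ℂ) + Complex.I * l‖ ^ 2 := by
      rw [a0]
      nlinarith [min_le_left 1 (ν ^ 2), min_le_right 1 (ν ^ 2), sq_nonneg l]
    nlinarith [norm_nonneg ((ν : ℂ) + Complex.I * l)]
  have hGi : Integrable (fun l : ℝ => g l * Complex.exp (((ν : ℂ) + Complex.I * l) * y)) := by
    refine hgi.mul_bdd (c := Real.exp (ν * y)) (by fun_prop)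
      (Filter.Eventually.of_forall fun l => ?_)
    rw [Complex.norm_exp]
    simp
  refine ⟨hGi, ?_⟩
  set k := Real.log K with hk
  have hKk : K = Real.exp k := (Real.exp_log hK).symm
  let f : ℝ → ℂ := fun x => Complex.exp (-ν * x) * ((max (K - Real.exp x) 0 : ℝ) : ℂ)
  have hfc : Continuous f := by fun_prop
  have hfind : ∀ s : ℂ, (fun x : ℝ => Complex.exp (s * x) * f x) =
      (Set.Iic k).indicator (fun x : ℝ =>
        K * Complex.exp ((s - ν) * x) - Complex.exp ((s - ν + 1) * x)) := by
    intro s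
    ext x
    by_cases hx : x ≤ k
    · rw [Set.indicator_of_mem (by exact hx)]
      have : Real.exp x ≤ K := by rw [hKk]; exact Real.exp_le_exp.2 hx
      simp only [f]
      rw [max_eq_left (by linarith)]
      have e1 : Complex.exp ((s - ν) * x) = Complex.exp (s * x) * Complex.exp (-ν * x) := by
        rw [← Complex.exp_add]; ring_nf
      have e2 : Complex.exp ((s - ν + 1) * x)
          = Complex.exp (s * x) * Complex.exp (-ν * x) * Complex.exp x := by
        rw [← Complex.exp_add, ← Complex.exp_add]; ring_nf
      rw [e1, e2]
      push_cast
      ring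
    · rw [Set.indicator_of_notMem (by exact hx)]
      have : K ≤ Real.exp x := by rw [hKk]; exact Real.exp_le_exp.2 (by linarith)
      simp only [f]
      rw [max_eq_right (by linarith)]
      simp
  have hfi : Integrable f := by
    have h := hfind 0
    simp only [zero_mul, Complex.exp_zero, one_mul] at h
    change Integrable (fun x => f x)
    rw [h, integrable_indicator_iff measurableSet_Iic]
    exact ((put_aux_exp_integrable _ k (by simp; linarith)).1.const_mul _).sub
      (put_aux_exp_integrable _ k (by simp; linarith)).1
  have hF : ∀ w : ℝ, FourierTransform.fourier f w = g (2 * Real.pi * w) := by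
    intro w
    rw [Real.fourier_eq']
    have h := hfind (-(2 * Real.pi * w) * Complex.I)
    have h2 : (fun v : ℝ => Complex.exp (↑(-2 * Real.pi * inner ℝ v w) * Complex.I) • f v) =
        (fun x : ℝ => Complex.exp (-(2 * Real.pi * w) * Complex.I * x) * f x) := by
      ext v
      rw [smul_eq_mul]
      congr 2
      simp
      ring
    have r1 : 0 < (-(2 * Real.pi * w) * Complex.I - ν : ℂ).re := by simp; linarith
    have r2 : 0 < (-(2 * Real.pi * w) * Complex.I - ν + 1 : ℂ).re := by simp; linarith
    rw [h2, h, integral_indicator measurableSet_Iic,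
      integral_sub ((put_aux_exp_integrable _ k r1).1.const_mul _)
        (put_aux_exp_integrable _ k r2).1, integral_const_mul,
      (put_aux_exp_integrable _ k r1).2, (put_aux_exp_integrable _ k r2).2, hg]
    have n1 := hz (2 * Real.pi * w)
    have n2 := hz1 (2 * Real.pi * w)
    push_cast at n1 n2 ⊢
    have q1 : (-(2 * Real.pi * w) * Complex.I - ν : ℂ) = -(ν + Complex.I * (2 * Real.pi * w)) := by
      ring
    have q2 : (-(2 * Real.pi * w) * Complex.I - ν + 1: ℂ)
        = -(ν - 1 + Complex.I * (2 * Real.pi * w)) := by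
      ring
    have q3 : (K : ℂ) * Complex.exp ((-(2 * Real.pi * w) * Complex.I - ν) * k)
        = Complex.exp (-(ν - 1 + Complex.I * (2 * Real.pi * w)) * k) := by
      rw [hKk, Complex.ofReal_exp, ← Complex.exp_add]; ring_nf
    rw [mul_div_assoc', q3, q2, q1]
    have q4 : (ν - 1 + Complex.I * (2 * Real.pi * w) : ℂ)
        = (ν + Complex.I * (2 * Real.pi * w)) - 1 := by ring
    rw [q4] at n2 ⊢
    generalize (ν + Complex.I * (2 * Real.pi * w) : ℂ) = z at n1 n2 ⊢
    generalize Complex.exp (-(z - 1) * k) = E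
    rw [div_neg, div_neg]
    field_simp
    ring
  have hpi : (2 * Real.pi) ≠ 0 := by positivity
  have hFi : Integrable (FourierTransform.fourier f) := by
    rw [show FourierTransform.fourier f = fun w => g (2 * Real.pi * w) from funext hF]
    exact hgi.comp_mul_left' hpi
  have hinv := congrFun (hfc.fourierInv_fourier_eq hfi hFi) y
  rw [Real.fourierInv_eq'] at hinv
  have hch := Measure.integral_comp_mul_left
    (fun l : ℝ => g l * Complex.exp (((ν : ℂ) + Complex.I * l) * y)) (2 * Real.pi)
  have hpos : |(2 * Real.pi)⁻¹| = (2 * Real.pi)⁻¹ := abs_of_pos (by positivity)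
  rw [hpos, Complex.real_smul] at hch
  push_cast at hch
  rw [one_div, ← hch]
  have hfin : (fun x : ℝ => g (2 * Real.pi * x) *
      Complex.exp (((ν : ℂ) + Complex.I * (2 * Real.pi * x)) * y)) = fun v : ℝ =>
      Complex.exp (ν * y) * (Complex.exp (↑(2 * Real.pi * inner ℝ v y) * Complex.I) •
        FourierTransform.fourier f v) := by
    ext v
    rw [hF, smul_eq_mul, ← mul_assoc (Complex.exp _), ← Complex.exp_add, mul_comm]
    congr 2
    simp
    ring
  rw [hfin, integral_const_mul, hinv]
  simp only [f]
  rw [← mul_assoc, ← Complex.exp_add]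
  simp
end
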